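/- arXiv:1611.03807 — 2 statements merged into one kernel-verified Lean document; each statement's English description precedes it below -/
import Mathlib

section
/- The integral Z(s₁,s₂,s₃) = ∫_{ℤ_p²∖{xy(x−y)=0}} |x|_p^{s₁} |y|_p^{s₂} |x−y|_p^{s₃} dx dy converges absolutely and defines a holomorphic function of (s₁,s₂,s₃) on the open set { (s₁,s₂,s₃) ∈ ℂ³ : Re(sᵢ) > −1 for i = 1,2,3 and Re(s₁) + Re(s₂) + Re(s₃) > −2 }. -/
open MeasureTheory Finset

noncomputable section

instance padicMS (p : ℕ) [Fact p.Prime] : MeasurableSpace ℚ_[p] := borel _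
instance padicBS (p : ℕ) [Fact p.Prime] : BorelSpace ℚ_[p] := ⟨rfl⟩

/-- The closed unit ball of `ℚ_[p]` (i.e. `ℤ_[p]`) as a positive compact subset. -/
def padicBall (p : ℕ) [Fact p.Prime] : TopologicalSpace.PositiveCompacts ℚ_[p] where
  carrier := Metric.closedBall 0 1
  isCompact' := isCompact_closedBall 0 1
  interior_nonempty' := ⟨0, Metric.ball_subset_interior_closedBall (Metric.mem_ball_self one_pos)⟩

/-- The Haar measure on `(ℚ_[p], +)`, normalized so that `ℤ_[p]` has measure `1`. -/
def padicHaar (p : ℕ) [Fact p.Prime] : Measure ℚ_[p] :=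
  Measure.addHaarMeasure (padicBall p)

instance padicHaarSF (p : ℕ) [Fact p.Prime] : SigmaFinite (padicHaar p) := by
  unfold padicHaar; infer_instance

/-- The product of normalized Haar measures on a finite power of `ℚ_[p]`. -/
def padicPi (p : ℕ) [Fact p.Prime] (ι : Type) [Fintype ι] : Measure (ι → ℚ_[p]) :=
  Measure.pi fun _ => padicHaar p

/-- Since each `l i` is nonpositive, the derivative near `v₀` is dominated by the norm of the
integrand at `v₀ - 2ε`, so integrability on an open set already gives holomorphy there. -/
lemma differentiableOn_integral_cexp_sum {Ω ι : Type*} [MeasurableSpace Ω] [Fintype ι]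
    {μ : Measure Ω} {l : ι → Ω → ℝ} (hl : ∀ i, Measurable (l i))
    (hl0 : ∀ᵐ x ∂μ, ∀ i, l i x ≤ 0) {U : Set (ι → ℂ)} (hU : IsOpen U)
    (hint : ∀ v ∈ U, Integrable (fun x => Complex.exp (∑ i, (l i x : ℂ) * v i)) μ) :
    DifferentiableOn ℂ (fun v => ∫ x, Complex.exp (∑ i, (l i x : ℂ) * v i) ∂μ) U := by
  intro v₀ hv₀
  obtain ⟨ε, hε, hshift⟩ : ∃ ε : ℝ, 0 < ε ∧ (fun i => v₀ i - 2 * (ε : ℂ)) ∈ U := by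
    have hcont : Continuous fun ε : ℝ => (fun i => v₀ i - 2 * (ε : ℂ)) := by fun_prop
    have hmem : (fun ε : ℝ => (fun i => v₀ i - 2 * (ε : ℂ))) ⁻¹' U ∈ nhds (0 : ℝ) :=
      (hU.preimage hcont).mem_nhds (by simpa using hv₀)
    obtain ⟨δ, hδ, hball⟩ := Metric.mem_nhds_iff.1 hmem
    refine ⟨δ / 2, half_pos hδ, hball ?_⟩
    rw [Metric.mem_ball, dist_zero_right, Real.norm_of_nonneg (half_pos hδ).le]
    exact half_lt_self hδ
  obtain ⟨L, hLm, hL⟩ : ∃ L : Ω → (ι → ℂ) →L[ℂ] ℂ, AEStronglyMeasurable L μ ∧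
      ∀ x v, L x v = ∑ i, (l i x : ℂ) * v i := by
    refine ⟨fun x => ∑ i, (l i x : ℂ) • (ContinuousLinearMap.proj i : (ι → ℂ) →L[ℂ] ℂ), ?_,
      fun x v => by simp⟩
    refine Finset.aestronglyMeasurable_fun_sum _ fun i _ => ?_
    exact (Complex.measurable_ofReal.comp (hl i)).aestronglyMeasurable.smul
      aestronglyMeasurable_const
  have hre : ∀ x (v : ι → ℂ), (∑ i, (l i x : ℂ) * v i).re = ∑ i, l i x * (v i).re :=
    fun x v => by simp
  have hmeas : ∀ v : ι → ℂ, Measurable fun x => Complex.exp (∑ i, (l i x : ℂ) * v i) := by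
    intro v
    have := hl
    fun_prop
  suffices h : HasFDerivAt (fun v => ∫ x, Complex.exp (∑ i, (l i x : ℂ) * v i) ∂μ)
      (∫ x, Complex.exp (∑ i, (l i x : ℂ) * v₀ i) • L x ∂μ) v₀ from
    h.differentiableAt.differentiableWithinAt
  have hbound : Integrable
      (fun x => ε⁻¹ * ‖Complex.exp (∑ i, (l i x : ℂ) * (v₀ i - 2 * (ε : ℂ)))‖) μ :=
    (hint _ hshift).norm.const_mul _
  have hF'meas : AEStronglyMeasurable
      (fun x => Complex.exp (∑ i, (l i x : ℂ) * v₀ i) • L x) μ :=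
    (hmeas v₀).aestronglyMeasurable.smul hLm
  refine hasFDerivAt_integral_of_dominated_of_fderiv_le (𝕜 := ℂ) (μ := μ)
    (F := fun (v : ι → ℂ) x => Complex.exp (∑ i, (l i x : ℂ) * v i))
    (F' := fun (v : ι → ℂ) x => Complex.exp (∑ i, (l i x : ℂ) * v i) • L x)
    (bound := fun x => ε⁻¹ * ‖Complex.exp (∑ i, (l i x : ℂ) * (v₀ i - 2 * (ε : ℂ)))‖)
    (Metric.ball_mem_nhds v₀ hε) (.of_forall fun v => (hmeas v).aestronglyMeasurable)
    (hint v₀ hv₀) hF'meas ?_ hbound ?_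
  · filter_upwards [hl0] with x hx v hv
    have hLn : ‖L x‖ ≤ ∑ i, -l i x := by
      refine ContinuousLinearMap.opNorm_le_bound _
        (Finset.sum_nonneg fun i _ => neg_nonneg.2 (hx i)) fun w => ?_
      rw [hL, Finset.sum_mul]
      refine norm_sum_le_of_le _ fun i _ => ?_
      rw [norm_mul, Complex.norm_real, Real.norm_of_nonpos (hx i)]
      exact mul_le_mul_of_nonneg_left (norm_le_pi_norm w i) (neg_nonneg.2 (hx i))
    have hLe : ‖L x‖ ≤ ε⁻¹ * Real.exp (ε * ∑ i, -l i x) := by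
      rw [inv_mul_eq_div, le_div_iff₀' hε]
      have := Real.add_one_le_exp (ε * ∑ i, -l i x)
      have := mul_le_mul_of_nonneg_left hLn hε.le
      linarith
    rw [norm_smul, Complex.norm_exp, Complex.norm_exp, hre, hre]
    refine (mul_le_mul_of_nonneg_left hLe (Real.exp_pos _).le).trans ?_
    rw [mul_left_comm, ← Real.exp_add]
    refine mul_le_mul_of_nonneg_left (Real.exp_le_exp.2 ?_) (inv_pos.2 hε).le
    rw [Finset.mul_sum, ← Finset.sum_add_distrib]
    refine Finset.sum_le_sum fun i _ => ?_
    have h1 : |(v i - v₀ i).re| < ε :=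
      (Complex.abs_re_le_norm _).trans_lt
        ((norm_le_pi_norm (v - v₀) i).trans_lt (by rwa [mem_ball_iff_norm] at hv))
    have h2 := (abs_lt.1 h1).1
    simp only [Complex.sub_re, Complex.mul_re, Complex.re_ofNat, Complex.ofReal_re,
      Complex.im_ofNat, Complex.ofReal_im, mul_zero, sub_zero] at h2 ⊢
    nlinarith [hx i]
  · refine .of_forall fun x v _ => ?_
    have h := (L x).hasFDerivAt (x := v)
    simpa only [hL] using h.cexp

lemma exists_rpow_mul_rpow_le {α β : ℝ} (hα : -1 < α) (hαβ : -2 < α + β) :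
    ∃ α' β' : ℝ, -1 < α' ∧ -1 < β' ∧
      ∀ u w : ℝ, 0 < u → u ≤ w → u ^ α * w ^ β ≤ u ^ α' * w ^ β' := by
  obtain ⟨α', h1, h2⟩ := exists_between (lt_min hα (show -1 < α + β + 1 by linarith))
  obtain ⟨h3, h4⟩ := lt_min_iff.1 h2
  refine ⟨α', α + β - α', h1, by linarith, fun u w hu huw => ?_⟩
  have hw := hu.trans_le huw
  calc u ^ α * w ^ β = u ^ α' * u ^ (α - α') * w ^ β := by
        rw [← Real.rpow_add hu]; ring_nf
    _ ≤ u ^ α' * w ^ (α - α') * w ^ β := by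
        gcongr
    _ = u ^ α' * w ^ (α + β - α') := by
        rw [mul_assoc, ← Real.rpow_add hw]; ring_nf

instance padicHaar_isAddHaarMeasure (p : ℕ) [Fact p.Prime] : (padicHaar p).IsAddHaarMeasure := by
  unfold padicHaar; infer_instance

lemma padic_norm_sub_le_max {p : ℕ} [Fact p.Prime] (x y : ℚ_[p]) : ‖x - y‖ ≤ max ‖x‖ ‖y‖ := by
  simpa [sub_eq_add_neg] using Padic.nonarchimedean x (-y)

lemma padic_norm_sub_eq_max_of_ne {p : ℕ} [Fact p.Prime] {x y : ℚ_[p]} (h : ‖x‖ ≠ ‖y‖) :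
    ‖x - y‖ = max ‖x‖ ‖y‖ := by
  simpa [sub_eq_add_neg] using Padic.add_eq_max_of_ne (q := x) (r := -y) (by simpa using h)

lemma padicHaar_closedBall_le (p : ℕ) [Fact p.Prime] (n : ℕ) :
    padicHaar p (Metric.closedBall 0 ((p : ℝ) ^ (-n : ℤ))) ≤
      ENNReal.ofReal ((p : ℝ) ^ (-n : ℤ)) := by
  have hp : 0 < (p : ℝ) := mod_cast (Fact.out : p.Prime).pos
  set r : ℝ := (p : ℝ) ^ (-n : ℤ) with hr
  have hr1 : r ≤ 1 := by
    rw [hr, zpow_neg, zpow_natCast]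
    exact inv_le_one_of_one_le₀ (one_le_pow₀ (mod_cast (Fact.out : p.Prime).one_le))
  have hdisj : Set.PairwiseDisjoint (↑(range (p ^ n)))
      fun i : ℕ => Metric.closedBall (i : ℚ_[p]) r := by
    intro i hi j hj hij
    refine Set.disjoint_left.2 fun t hti htj => hij ?_
    have hd : ‖((i - j : ℤ) : ℚ_[p])‖ ≤ r := by
      have := IsUltrametricDist.dist_triangle_max (i : ℚ_[p]) t j
      rw [Metric.mem_closedBall] at hti htj
      rw [dist_comm (i : ℚ_[p]) t, dist_eq_norm] at this
      push_cast
      exact this.trans (max_le hti htj)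
    rw [Padic.norm_int_le_pow_iff_dvd] at hd
    have hmod : j ≡ i [MOD p ^ n] := (Nat.modEq_iff_dvd).2 (by exact_mod_cast hd)
    exact (hmod.eq_of_lt_of_lt (by simpa using hj) (by simpa using hi)).symm
  have hsum : (p ^ n : ENNReal) * padicHaar p (Metric.closedBall 0 r) ≤ 1 := by
    have hball : ∀ i : ℕ, padicHaar p (Metric.closedBall (i : ℚ_[p]) r) =
        padicHaar p (Metric.closedBall 0 r) := fun i => by
      rw [← measure_preimage_add (padicHaar p) (i : ℚ_[p]), preimage_add_closedBall, sub_self]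
    calc (p ^ n : ENNReal) * padicHaar p (Metric.closedBall 0 r)
        = ∑ i ∈ range (p ^ n), padicHaar p (Metric.closedBall (i : ℚ_[p]) r) := by
          simp [hball]
      _ = padicHaar p (⋃ i ∈ range (p ^ n), Metric.closedBall (i : ℚ_[p]) r) :=
          (measure_biUnion_finset hdisj fun i _ => measurableSet_closedBall).symm
      _ ≤ padicHaar p (padicBall p) := by
          refine measure_mono (Set.iUnion₂_subset fun i _ t ht => ?_)
          have h1 : ‖(i : ℚ_[p])‖ ≤ 1 := mod_cast Padic.norm_int_le_one (p := p) i
          have h2 : ‖t - i‖ ≤ 1 := (mem_closedBall_iff_norm.1 ht).trans hr1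
          refine mem_closedBall_zero_iff.2 ?_
          have := Padic.nonarchimedean (t - (i : ℚ_[p])) (i : ℚ_[p])
          rw [sub_add_cancel] at this
          exact this.trans (max_le h2 h1)
      _ = 1 := Measure.addHaarMeasure_self
  have hrinv : ENNReal.ofReal r = (p ^ n : ENNReal)⁻¹ := by
    rw [hr, zpow_neg, zpow_natCast, ENNReal.ofReal_inv_of_pos (pow_pos hp n),
      ENNReal.ofReal_pow hp.le, ENNReal.ofReal_natCast]
  rw [hrinv]
  exact (ENNReal.le_inv_iff_mul_le).2 (by rwa [mul_comm] at hsum)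

lemma integrableOn_norm_rpow_padicHaar (p : ℕ) [Fact p.Prime] {α : ℝ} (hα : -1 < α) :
    IntegrableOn (fun t : ℚ_[p] => ‖t‖ ^ α) (Metric.closedBall 0 1) (padicHaar p) := by
  have hp : 0 < (p : ℝ) := mod_cast (Fact.out : p.Prime).pos
  have hp1 : 1 < (p : ℝ) := mod_cast (Fact.out : p.Prime).one_lt
  refine ⟨(measurable_norm.pow_const α).aestronglyMeasurable, ?_⟩
  set B : ℕ → Set ℚ_[p] := fun n => Metric.closedBall 0 ((p : ℝ) ^ (-n : ℤ))
  set c : ℕ → ENNReal := fun n => ENNReal.ofReal (((p : ℝ) ^ (-n : ℤ)) ^ α)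
  set ρ : ℝ := (p : ℝ) ^ (-(1 + α)) with hρ
  have hρ1 : ρ < 1 := Real.rpow_lt_one_of_one_lt_of_neg hp1 (by linarith)
  have hρ0 : 0 ≤ ρ := Real.rpow_nonneg hp.le _
  have hle : ∀ t ∈ Metric.closedBall (0 : ℚ_[p]) 1,
      ‖‖t‖ ^ α‖ₑ ≤ ∑' n, (B n).indicator (fun _ => c n) t := by
    intro t ht
    rw [Real.enorm_of_nonneg (Real.rpow_nonneg (norm_nonneg t) α)]
    rcases eq_or_ne t 0 with rfl | h0
    · refine le_trans ?_ (ENNReal.le_tsum 0)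
      have : (0 : ℚ_[p]) ∈ B 0 := by simp [B]
      rw [Set.indicator_of_mem this]
      refine ENNReal.ofReal_le_ofReal ?_
      simpa using Real.zero_rpow_le_one α
    · obtain ⟨n, hn⟩ := Int.eq_ofNat_of_zero_le
        ((Padic.norm_le_one_iff_val_nonneg t).1 (mem_closedBall_zero_iff.1 ht))
      have hnorm : ‖t‖ = (p : ℝ) ^ (-n : ℤ) := by
        rw [Padic.norm_eq_zpow_neg_valuation h0, hn]
      refine le_trans ?_ (ENNReal.le_tsum n)
      rw [Set.indicator_of_mem (mem_closedBall_zero_iff.2 hnorm.le), hnorm]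
  have hterm : ∀ n, c n * padicHaar p (B n) ≤ ENNReal.ofReal (ρ ^ n) := by
    intro n
    refine (mul_le_mul_right (padicHaar_closedBall_le p n) _).trans_eq ?_
    rw [← ENNReal.ofReal_mul (by positivity)]
    congr 1
    rw [hρ, ← Real.rpow_intCast, ← Real.rpow_mul hp.le, ← Real.rpow_add hp, ← Real.rpow_natCast,
      ← Real.rpow_mul hp.le]
    push_cast
    ring_nf
  calc ∫⁻ t in Metric.closedBall 0 1, ‖‖t‖ ^ α‖ₑ ∂padicHaar p
      ≤ ∫⁻ t in Metric.closedBall 0 1, ∑' n, (B n).indicator (fun _ => c n) t ∂padicHaar p :=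
        setLIntegral_mono' measurableSet_closedBall hle
    _ ≤ ∫⁻ t, ∑' n, (B n).indicator (fun _ => c n) t ∂padicHaar p := setLIntegral_le_lintegral _ _
    _ = ∑' n, c n * padicHaar p (B n) := by
        rw [lintegral_tsum fun n =>
          (measurable_const.indicator measurableSet_closedBall).aemeasurable]
        exact tsum_congr fun n => lintegral_indicator_const measurableSet_closedBall _
    _ ≤ ∑' n, ENNReal.ofReal (ρ ^ n) := ENNReal.tsum_le_tsum hterm
    _ = ENNReal.ofReal (∑' n, ρ ^ n) :=
        (ENNReal.ofReal_tsum_of_nonneg (fun n => pow_nonneg hρ0 n)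
          (summable_geometric_of_lt_one hρ0 hρ1)).symm
    _ < ⊤ := ENNReal.ofReal_lt_top

/-- The integration domain `ℤ_p² ∖ {xy(x-y)=0}`. -/
def fourPointDomain (p : ℕ) [Fact p.Prime] : Set (ℚ_[p] × ℚ_[p]) :=
  {x | ‖x.1‖ ≤ 1 ∧ ‖x.2‖ ≤ 1 ∧ x.1 ≠ 0 ∧ x.2 ≠ 0 ∧ x.1 ≠ x.2}

lemma measurableSet_fourPointDomain (p : ℕ) [Fact p.Prime] :
    MeasurableSet (fourPointDomain p) := by
  refine (measurableSet_le measurable_fst.norm measurable_const).inter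
    ((measurableSet_le measurable_snd.norm measurable_const).inter ?_)
  exact ((measurableSet_eq_fun measurable_fst measurable_const).compl).inter
    (((measurableSet_eq_fun measurable_snd measurable_const).compl).inter
      (measurableSet_eq_fun measurable_fst measurable_snd).compl)

lemma integrableOn_fourPoint_rpow (p : ℕ) [Fact p.Prime] {a b c : ℝ} (ha : -1 < a) (hb : -1 < b)
    (hc : -1 < c) (habc : -2 < a + b + c) :
    IntegrableOn (fun x : ℚ_[p] × ℚ_[p] => ‖x.1‖ ^ a * ‖x.2‖ ^ b * ‖x.1 - x.2‖ ^ c)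
      (fourPointDomain p) ((padicHaar p).prod (padicHaar p)) := by
  set P : ℝ → ℚ_[p] → ℝ := fun α => (Metric.closedBall 0 1).indicator fun t => ‖t‖ ^ α
  have hPint : ∀ {α}, -1 < α → Integrable (P α) (padicHaar p) := fun hα =>
    (integrableOn_norm_rpow_padicHaar p hα).integrable_indicator measurableSet_closedBall
  have hP0 : ∀ α t, 0 ≤ P α t := fun α t =>
    Set.indicator_nonneg (fun t _ => Real.rpow_nonneg (norm_nonneg t) α) t
  have hPeq : ∀ α t, ‖t‖ ≤ 1 → P α t = ‖t‖ ^ α := fun α t ht =>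
    Set.indicator_of_mem (mem_closedBall_zero_iff.2 ht) _
  obtain ⟨a₁, b₁, ha₁, hb₁, h₁⟩ :=
    exists_rpow_mul_rpow_le (β := b + c) ha (by linarith)
  obtain ⟨b₂, a₂, hb₂, ha₂, h₂⟩ :=
    exists_rpow_mul_rpow_le (β := a + c) hb (by linarith)
  obtain ⟨c₃, b₃, hc₃, hb₃, h₃⟩ :=
    exists_rpow_mul_rpow_le (β := a + b) hc (by linarith)
  have hI₃ : Integrable (fun x : ℚ_[p] × ℚ_[p] => P b₃ x.2 * P c₃ (x.1 - x.2))
      ((padicHaar p).prod (padicHaar p)) :=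
    (hPint hb₃).convolution_integrand (ContinuousLinearMap.mul ℝ ℝ) (hPint hc₃)
  refine Integrable.mono' ((((hPint ha₁).mul_prod (hPint hb₁)).add
    ((hPint ha₂).mul_prod (hPint hb₂))).add hI₃).integrableOn ?_ ?_
  · refine Measurable.aestronglyMeasurable ?_
    fun_prop
  · filter_upwards [ae_restrict_mem (measurableSet_fourPointDomain p)] with x hx
    obtain ⟨hx1, hy1, hx0, hy0, hxy⟩ := hx
    have hz1 : ‖x.1 - x.2‖ ≤ 1 := (padic_norm_sub_le_max _ _).trans (max_le hx1 hy1)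
    have hX := norm_pos_iff.2 hx0
    have hY := norm_pos_iff.2 hy0
    have hZ := norm_pos_iff.2 (sub_ne_zero.2 hxy)
    have hn₁ := mul_nonneg (hP0 a₁ x.1) (hP0 b₁ x.2)
    have hn₂ := mul_nonneg (hP0 a₂ x.1) (hP0 b₂ x.2)
    have hn₃ := mul_nonneg (hP0 b₃ x.2) (hP0 c₃ (x.1 - x.2))
    rw [Real.norm_of_nonneg (by positivity)]
    simp only [Pi.add_apply]
    rcases lt_trichotomy ‖x.1‖ ‖x.2‖ with h | h | h
    · have hz : ‖x.1 - x.2‖ = ‖x.2‖ := by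
        rw [padic_norm_sub_eq_max_of_ne h.ne, max_eq_right h.le]
      have := h₁ _ _ hX h.le
      rw [Real.rpow_add hY, ← mul_assoc] at this
      rw [← hPeq a₁ _ hx1, ← hPeq b₁ _ hy1] at this
      rw [hz]
      linarith
    · have hz : ‖x.1 - x.2‖ ≤ ‖x.2‖ := by
        simpa [h] using padic_norm_sub_le_max x.1 x.2
      have := h₃ _ _ hZ hz
      rw [Real.rpow_add hY] at this
      rw [← hPeq c₃ _ hz1, ← hPeq b₃ _ hy1] at this
      rw [h]
      linarith
    · have hz : ‖x.1 - x.2‖ = ‖x.1‖ := by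
        rw [padic_norm_sub_eq_max_of_ne h.ne', max_eq_left h.le]
      have := h₂ _ _ hY h.le
      rw [Real.rpow_add hX] at this
      rw [← hPeq a₂ _ hx1, ← hPeq b₂ _ hy1] at this
      rw [hz]
      linarith

lemma isOpen_fourPoint_region :
    IsOpen {v : Fin 3 → ℂ | (∀ i, -1 < (v i).re) ∧ -2 < (v 0).re + (v 1).re + (v 2).re} := by
  simp only [Set.ofPred_and, Set.ofPred_forall]
  exact (isOpen_iInter_of_finite fun i => isOpen_lt (by fun_prop) (by fun_prop)).inter
    (isOpen_lt (by fun_prop) (by fun_prop))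

lemma integrableOn_fourPoint_cpow (p : ℕ) [Fact p.Prime] {v : Fin 3 → ℂ}
    (hv : (∀ i, -1 < (v i).re) ∧ -2 < (v 0).re + (v 1).re + (v 2).re) :
    IntegrableOn
      (fun x : ℚ_[p] × ℚ_[p] =>
        (‖x.1‖ : ℂ) ^ (v 0) * (‖x.2‖ : ℂ) ^ (v 1) * (‖x.1 - x.2‖ : ℂ) ^ (v 2))
      (fourPointDomain p) ((padicHaar p).prod (padicHaar p)) := by
  refine Integrable.mono'
    (integrableOn_fourPoint_rpow p (hv.1 0) (hv.1 1) (hv.1 2) hv.2) ?_ ?_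
  · refine Measurable.aestronglyMeasurable ?_
    fun_prop
  · filter_upwards [ae_restrict_mem (measurableSet_fourPointDomain p)] with x hx
    obtain ⟨-, -, hx0, hy0, hxy⟩ := hx
    rw [norm_mul, norm_mul, Complex.norm_cpow_eq_rpow_re_of_pos (norm_pos_iff.2 hx0),
      Complex.norm_cpow_eq_rpow_re_of_pos (norm_pos_iff.2 hy0),
      Complex.norm_cpow_eq_rpow_re_of_pos (norm_pos_iff.2 (sub_ne_zero.2 hxy))]

/-- The local zeta function `Z(s₁,s₂,s₃) = ∫_{ℤ_p² ∖ {xy(x-y)=0}} |x|^{s₁}|y|^{s₂}|x-y|^{s₃}`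
converges absolutely and is holomorphic on
`{Re sᵢ > -1 (i = 1,2,3)} ∩ {Re s₁ + Re s₂ + Re s₃ > -2}`. -/
theorem fourPoint_zeta_holomorphic (p : ℕ) [Fact p.Prime] :
    IsOpen {v : Fin 3 → ℂ | (∀ i, -1 < (v i).re) ∧ -2 < (v 0).re + (v 1).re + (v 2).re} ∧
    (∀ v : Fin 3 → ℂ,
      ((∀ i, -1 < (v i).re) ∧ -2 < (v 0).re + (v 1).re + (v 2).re) →
      IntegrableOn
        (fun x : ℚ_[p] × ℚ_[p] =>
          (‖x.1‖ : ℂ) ^ (v 0) * (‖x.2‖ : ℂ) ^ (v 1) * (‖x.1 - x.2‖ : ℂ) ^ (v 2))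
        {x : ℚ_[p] × ℚ_[p] | ‖x.1‖ ≤ 1 ∧ ‖x.2‖ ≤ 1 ∧ x.1 ≠ 0 ∧ x.2 ≠ 0 ∧ x.1 ≠ x.2}
        ((padicHaar p).prod (padicHaar p))) ∧
    DifferentiableOn ℂ
      (fun v : Fin 3 → ℂ =>
        ∫ x in {x : ℚ_[p] × ℚ_[p] | ‖x.1‖ ≤ 1 ∧ ‖x.2‖ ≤ 1 ∧ x.1 ≠ 0 ∧ x.2 ≠ 0 ∧ x.1 ≠ x.2},
          (‖x.1‖ : ℂ) ^ (v 0) * (‖x.2‖ : ℂ) ^ (v 1) * (‖x.1 - x.2‖ : ℂ) ^ (v 2)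
          ∂((padicHaar p).prod (padicHaar p)))
      {v : Fin 3 → ℂ | (∀ i, -1 < (v i).re) ∧ -2 < (v 0).re + (v 1).re + (v 2).re} := by
  refine ⟨isOpen_fourPoint_region, fun v hv => integrableOn_fourPoint_cpow p hv, ?_⟩
  let l : Fin 3 → ℚ_[p] × ℚ_[p] → ℝ :=
    ![fun x => Real.log ‖x.1‖, fun x => Real.log ‖x.2‖, fun x => Real.log ‖x.1 - x.2‖]
  have hl : ∀ i, Measurable (l i) := by
    intro i
    fin_cases i
    · exact Real.measurable_log.comp measurable_fst.norm
    · exact Real.measurable_log.comp measurable_snd.norm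
    · exact Real.measurable_log.comp (measurable_fst.sub measurable_snd).norm
  have hS := measurableSet_fourPointDomain p
  have hl0 : ∀ᵐ x ∂((padicHaar p).prod (padicHaar p)).restrict (fourPointDomain p),
      ∀ i, l i x ≤ 0 := by
    filter_upwards [ae_restrict_mem hS] with x hx i
    obtain ⟨hx1, hy1, -⟩ := hx
    fin_cases i
    · exact Real.log_nonpos (norm_nonneg _) hx1
    · exact Real.log_nonpos (norm_nonneg _) hy1
    · exact Real.log_nonpos (norm_nonneg _)
        ((padic_norm_sub_le_max _ _).trans (max_le hx1 hy1))
  have hexp : ∀ v : Fin 3 → ℂ, Set.EqOn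
      (fun x : ℚ_[p] × ℚ_[p] =>
        (‖x.1‖ : ℂ) ^ (v 0) * (‖x.2‖ : ℂ) ^ (v 1) * (‖x.1 - x.2‖ : ℂ) ^ (v 2))
      (fun x => Complex.exp (∑ i, (l i x : ℂ) * v i)) (fourPointDomain p) := by
    rintro v x ⟨-, -, hx0, hy0, hxy⟩
    have hx0' : (‖x.1‖ : ℂ) ≠ 0 := by simpa using hx0
    have hy0' : (‖x.2‖ : ℂ) ≠ 0 := by simpa using hy0
    have hz0' : (‖x.1 - x.2‖ : ℂ) ≠ 0 := by simpa using sub_ne_zero.2 hxy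
    simp [l, Fin.sum_univ_three, Complex.cpow_def_of_ne_zero hx0',
      Complex.cpow_def_of_ne_zero hy0', Complex.cpow_def_of_ne_zero hz0', Complex.exp_add,
      Complex.ofReal_log]
  refine (differentiableOn_integral_cexp_sum hl hl0 isOpen_fourPoint_region fun v hv =>
    (integrableOn_fourPoint_cpow p hv).congr_fun (hexp v) hS).congr fun v _ => ?_
  exact setIntegral_congr_fun hS (hexp v)
end
end

section
/- Let I ⊆ T and suppose Re(s_{1i}) + Re(s_{(N−1)i}) + Σ_{2≤j≤N−2, j≠i} Re(s_{ij}) + 1 < 0 for every i ∈ T∖I, and Re(s_{ij}) > −1 for all i,j ∈ T∖I with i < j. Then ∫_{(ℚ_p∖ℤ_p)^{|T∖I|}} F₁(s,x;N) ∏_{i∈T∖I} dx_i = p^{M(s)} ∫_{ℤ_p^{|T∖I|}} [ ∏_{2≤i<j≤N−2, i,j∈T∖I} |y_i−y_j|_p^{s_{ij}} / ∏_{i∈T∖I} |y_i|_p^{2+s_{1i}+s_{(N−1)i}+Σ_{2≤j≤N−2, j≠i} s_{ij}} ] ∏_{i∈T∖I} dy_i, where M(s) = |T∖I| + Σ_{i∈T∖I}(s_{1i}+s_{(N−1)i})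 + Σ_{2≤i<j≤N−2, i∈T∖I, j∈T} s_{ij} + Σ_{2≤i<j≤N−2, i∈I, j∈T∖I} s_{ij}. -/
open MeasureTheory Finset

noncomputable section

/-- `T = {2, …, N-2}`. -/
def Tset (N : ℕ) : Finset ℕ := Finset.Icc 2 (N - 2)

/-- The ordered pairs `(i, j)` with `i < j` and `i, j ∈ A`. -/
def pairsIn (A : Finset ℕ) : Finset (ℕ × ℕ) := (A ×ˢ A).filter fun q => q.1 < q.2

/-- The coordinates of a point of `ℚ_p^A`, as a function on `ℕ` (junk value `0` off `A`). -/
def padicCoord {p : ℕ} [Fact p.Prime] {A : Finset ℕ} (x : A → ℚ_[p]) (n : ℕ) : ℚ_[p] :=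
  if h : n ∈ A then x ⟨n, h⟩ else 0

open scoped ENNReal Pointwise

section Haar

variable {p : ℕ} [Fact p.Prime]

instance : (padicHaar p).IsAddHaarMeasure := by
  unfold padicHaar; infer_instance

instance : (padicHaar p).Regular := by
  unfold padicHaar; infer_instance

theorem padicHaar_closedBall_one : padicHaar p (Metric.closedBall 0 1) = 1 :=
  Measure.addHaarMeasure_self (K₀ := padicBall p)

theorem Padic.norm_p_mul_lt_one_iff (x : ℚ_[p]) : ‖(p : ℚ_[p]) * x‖ < 1 ↔ ‖x‖ ≤ 1 := by
  have hp : (0 : ℝ) < p := by exact_mod_cast (Fact.out : p.Prime).pos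
  have h := Padic.norm_le_pow_iff_norm_lt_pow_add_one x 0
  simp only [zpow_zero, zero_add, zpow_one] at h
  rw [h, norm_mul, Padic.norm_p, inv_mul_lt_iff₀ hp, mul_one]

theorem Padic.closedBall_one_eq_iUnion_ball :
    Metric.closedBall (0 : ℚ_[p]) 1 = ⋃ k ∈ Finset.range p, Metric.ball (k : ℚ_[p]) 1 := by
  ext x
  simp only [Metric.mem_closedBall, Set.mem_iUnion, Metric.mem_ball, Finset.mem_range, exists_prop,
    dist_eq_norm, sub_zero]
  constructor
  · intro hx
    obtain ⟨n, hn, hxn⟩ := PadicInt.exists_mem_range (p := p) ⟨x, hx⟩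
    refine ⟨n, hn, ?_⟩
    rw [IsLocalRing.mem_maximalIdeal, PadicInt.mem_nonunits, PadicInt.norm_def] at hxn
    exact_mod_cast hxn
  · rintro ⟨k, -, hk⟩
    have hk' : ‖(k : ℚ_[p])‖ ≤ 1 := by simpa using Padic.norm_int_le_one (p := p) k
    simpa using (Padic.nonarchimedean (x - (k : ℚ_[p])) k).trans (max_le hk.le hk')

theorem Padic.pairwiseDisjoint_ball_range :
    Set.PairwiseDisjoint (Finset.range p : Set ℕ) fun k => Metric.ball (k : ℚ_[p]) 1 := by
  intro j hj k hk hjk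
  rw [Function.onFun, Set.disjoint_left]
  intro x hxj hxk
  rw [Metric.mem_ball, dist_eq_norm] at hxj hxk
  have hx : ‖x‖ ≤ 1 := by
    rw [← dist_zero_right, ← Metric.mem_closedBall, Padic.closedBall_one_eq_iUnion_ball]
    simp only [Set.mem_iUnion]
    exact ⟨j, hj, by rwa [Metric.mem_ball, dist_eq_norm]⟩
  refine hjk ((PadicInt.existsUnique_mem_range (p := p) ⟨x, hx⟩).unique
    ⟨Finset.mem_range.1 hj, ?_⟩ ⟨Finset.mem_range.1 hk, ?_⟩)
  all_goals
    rw [IsLocalRing.mem_maximalIdeal, PadicInt.mem_nonunits, PadicInt.norm_def]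
    simpa

theorem padicHaar_ball_one : padicHaar p (Metric.ball 0 1) = (p : ℝ≥0∞)⁻¹ := by
  have h := padicHaar_closedBall_one (p := p)
  rw [Padic.closedBall_one_eq_iUnion_ball, measure_biUnion_finset
    Padic.pairwiseDisjoint_ball_range fun _ _ => measurableSet_ball] at h
  have hk (k : ℕ) : padicHaar p (Metric.ball (k : ℚ_[p]) 1) = padicHaar p (Metric.ball 0 1) := by
    rw [← measure_preimage_add (padicHaar p) (k : ℚ_[p])]
    simp
  simp only [hk, Finset.sum_const, Finset.card_range, nsmul_eq_mul] at h
  exact ENNReal.eq_inv_of_mul_eq_one_left (by rwa [mul_comm])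

theorem distribHaarChar_padic (u : ℚ_[p]ˣ) : distribHaarChar ℚ_[p] u = ‖(u : ℚ_[p])‖₊ := by
  have hp0 : (p : ℚ_[p]) ≠ 0 := by exact_mod_cast (Fact.out : p.Prime).ne_zero
  have key {v : ℚ_[p]ˣ} {r : NNReal} (h : padicHaar p (v • Metric.closedBall 0 1) = r) :
      distribHaarChar ℚ_[p] v = r :=
    distribHaarChar_eq_of_measure_smul_eq_mul (μ := padicHaar p) (s := Metric.closedBall 0 1)
      (by simp [padicHaar_closedBall_one]) (by simp [padicHaar_closedBall_one])
      (by simp [padicHaar_closedBall_one, h])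
  have hprime : distribHaarChar ℚ_[p] (Units.mk0 (p : ℚ_[p]) hp0) = (p : NNReal)⁻¹ := by
    apply key
    have : Units.mk0 (p : ℚ_[p]) hp0 • Metric.closedBall (0 : ℚ_[p]) 1 = Metric.ball 0 1 := by
      ext x
      rw [Set.mem_smul_set_iff_inv_smul_mem, Metric.mem_closedBall, dist_zero_right,
        ← Padic.norm_p_mul_lt_one_iff, Metric.mem_ball, dist_zero_right]
      simp [Units.smul_def, hp0]
    rw [this, padicHaar_ball_one, ENNReal.coe_inv (by exact_mod_cast (Fact.out : p.Prime).ne_zero)]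
    simp
  have hunit {v : ℚ_[p]ˣ} (hv : ‖(v : ℚ_[p])‖ = 1) : distribHaarChar ℚ_[p] v = 1 := by
    apply key
    have : v • Metric.closedBall (0 : ℚ_[p]) 1 = Metric.closedBall 0 1 := by
      ext x
      rw [Set.mem_smul_set_iff_inv_smul_mem]
      simp [Units.smul_def, hv]
    rw [this, padicHaar_closedBall_one, ENNReal.coe_one]
  have hu := Padic.norm_eq_zpow_neg_valuation u.ne_zero
  set n := (u : ℚ_[p]).valuation
  have hdecomp : u = Units.mk0 (p : ℚ_[p]) hp0 ^ n * (Units.mk0 (p : ℚ_[p]) hp0 ^ (-n) * u) := by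
    rw [← mul_assoc, ← zpow_add]; simp
  have hpR : (p : ℝ) ≠ 0 := by exact_mod_cast (Fact.out : p.Prime).ne_zero
  rw [hdecomp, map_mul, map_zpow, hprime, hunit, ← hdecomp]
  · apply NNReal.coe_injective
    simp [hu]
  · simp [hu, zpow_ne_zero n hpR]

theorem map_mul_left_padicHaar {a : ℚ_[p]} (ha : a ≠ 0) :
    (padicHaar p).map (a * ·) = ENNReal.ofReal ‖a‖⁻¹ • padicHaar p := by
  ext t ht
  have hpre : (a * ·) ⁻¹' t = (Units.mk0 a ha)⁻¹ • t := by
    ext x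
    rw [Set.mem_smul_set_iff_inv_smul_mem, inv_inv]
    rfl
  rw [Measure.map_apply (by fun_prop) ht, hpre, ← distribHaarChar_mul, distribHaarChar_padic]
  simp [ENNReal.ofReal, Real.toNNReal_inv, norm_toNNReal]

theorem lintegral_comp_mul_left_padicHaar {a : ℚ_[p]} (ha : a ≠ 0) {f : ℚ_[p] → ℝ≥0∞}
    (hf : Measurable f) :
    ∫⁻ x, f (a * x) ∂padicHaar p = ENNReal.ofReal ‖a‖⁻¹ * ∫⁻ x, f x ∂padicHaar p := by
  rw [← lintegral_map hf (by fun_prop), map_mul_left_padicHaar ha, lintegral_smul_measure,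
    smul_eq_mul]

/-- The measure `dx / ‖x‖` on `ℚ_[p]`, which is invariant under the nonzero homotheties. -/
def padicMulHaar (p : ℕ) [Fact p.Prime] : Measure ℚ_[p] :=
  (padicHaar p).withDensity fun x => ENNReal.ofReal ‖x‖⁻¹

instance : SFinite (padicMulHaar p) := by
  unfold padicMulHaar; infer_instance

theorem ae_padicHaar_ne_zero : ∀ᵐ x ∂padicHaar p, x ≠ 0 := by
  rw [ae_iff]
  simp

theorem ae_padicMulHaar_ne_zero : ∀ᵐ x ∂padicMulHaar p, x ≠ 0 :=
  (withDensity_absolutelyContinuous _ _).ae_le ae_padicHaar_ne_zero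

theorem lintegral_padicMulHaar {f : ℚ_[p] → ℝ≥0∞} (hf : Measurable f) :
    ∫⁻ x, f x ∂padicMulHaar p = ∫⁻ x, ENNReal.ofReal ‖x‖⁻¹ * f x ∂padicHaar p := by
  rw [padicMulHaar, lintegral_withDensity_eq_lintegral_mul _ (by fun_prop) hf]
  rfl

theorem lintegral_comp_mul_left_padicMulHaar {a : ℚ_[p]} (ha : a ≠ 0) {f : ℚ_[p] → ℝ≥0∞}
    (hf : Measurable f) :
    ∫⁻ x, f (a * x) ∂padicMulHaar p = ∫⁻ x, f x ∂padicMulHaar p := by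
  rw [lintegral_padicMulHaar (by fun_prop), lintegral_padicMulHaar hf]
  have ha' : ‖a‖ ≠ 0 := norm_ne_zero_iff.2 ha
  have h (x : ℚ_[p]) : ENNReal.ofReal ‖x‖⁻¹ * f (a * x) =
      ENNReal.ofReal ‖a‖ * (ENNReal.ofReal ‖a * x‖⁻¹ * f (a * x)) := by
    rw [← mul_assoc, ← ENNReal.ofReal_mul (norm_nonneg _), norm_mul, mul_inv,
      mul_inv_cancel_left₀ ha']
  simp_rw [h]
  rw [lintegral_const_mul _ (by fun_prop),
    lintegral_comp_mul_left_padicHaar ha (f := fun x => ENNReal.ofReal ‖x‖⁻¹ * f x) (by fun_prop),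
    ← mul_assoc, ← ENNReal.ofReal_mul (norm_nonneg _), mul_inv_cancel₀ ha', ENNReal.ofReal_one,
    one_mul]

theorem padicMulHaar_sphere_one : padicMulHaar p (Metric.sphere 0 1) =
    padicHaar p (Metric.sphere 0 1) := by
  have hs : MeasurableSet (Metric.sphere (0 : ℚ_[p]) 1) := Metric.isClosed_sphere.measurableSet
  rw [padicMulHaar, withDensity_apply _ hs, setLIntegral_congr_fun (g := fun _ => 1) hs]
  · simp
  · intro x hx
    simp [mem_sphere_zero_iff_norm.1 hx]

/-- Inversion preserves `dx / ‖x‖`: test both sides against a function supported on the unit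
sphere and exchange the order of integration. -/
theorem lintegral_comp_inv_padicMulHaar {f : ℚ_[p] → ℝ≥0∞} (hf : Measurable f) :
    ∫⁻ x, f x⁻¹ ∂padicMulHaar p = ∫⁻ x, f x ∂padicMulHaar p := by
  have hs : MeasurableSet (Metric.sphere (0 : ℚ_[p]) 1) := Metric.isClosed_sphere.measurableSet
  set g : ℚ_[p] → ℝ≥0∞ := (Metric.sphere (0 : ℚ_[p]) 1).indicator 1 with hg_def
  have hg : Measurable g := measurable_one.indicator hs
  have hgint : ∫⁻ x, g x ∂padicMulHaar p = padicHaar p (Metric.sphere 0 1) := by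
    rw [hg_def, lintegral_indicator_one hs, padicMulHaar_sphere_one]
  have hg0 : ∫⁻ x, g x ∂padicMulHaar p ≠ 0 := by
    rw [hgint]
    exact (IsUltrametricDist.isOpen_sphere (0 : ℚ_[p]) one_ne_zero).measure_ne_zero _ ⟨1, by simp⟩
  have hgtop : ∫⁻ x, g x ∂padicMulHaar p ≠ ∞ := by
    rw [hgint]
    exact (isCompact_sphere _ _).measure_lt_top.ne
  rw [← ENNReal.mul_left_inj hg0 hgtop]
  calc (∫⁻ x, f x⁻¹ ∂padicMulHaar p) * ∫⁻ y, g y ∂padicMulHaar p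
      = ∫⁻ x, ∫⁻ y, f x⁻¹ * g (x * y) ∂padicMulHaar p ∂padicMulHaar p := by
        rw [← lintegral_mul_const _ (by fun_prop)]
        refine lintegral_congr_ae (ae_padicMulHaar_ne_zero.mono fun x hx => ?_)
        dsimp only
        rw [lintegral_const_mul _ (by fun_prop), lintegral_comp_mul_left_padicMulHaar hx hg]
    _ = ∫⁻ y, ∫⁻ x, f x⁻¹ * g (x * y) ∂padicMulHaar p ∂padicMulHaar p :=
        lintegral_lintegral_swap (by fun_prop)
    _ = ∫⁻ y, ∫⁻ x, f (x⁻¹ * y) * g x ∂padicMulHaar p ∂padicMulHaar p := by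
        refine lintegral_congr_ae (ae_padicMulHaar_ne_zero.mono fun y hy => ?_)
        dsimp only
        rw [← lintegral_comp_mul_left_padicMulHaar (inv_ne_zero hy)
          (f := fun x => f x⁻¹ * g (x * y)) (by fun_prop)]
        refine lintegral_congr fun x => ?_
        rw [mul_inv, inv_inv, mul_comm y, mul_right_comm, inv_mul_cancel₀ hy, one_mul]
    _ = ∫⁻ x, ∫⁻ y, f (x⁻¹ * y) * g x ∂padicMulHaar p ∂padicMulHaar p :=
        lintegral_lintegral_swap (by fun_prop)
    _ = (∫⁻ x, f x ∂padicMulHaar p) * ∫⁻ y, g y ∂padicMulHaar p := by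
        rw [← lintegral_const_mul _ hg]
        refine lintegral_congr_ae (ae_padicMulHaar_ne_zero.mono fun x hx => ?_)
        dsimp only
        rw [lintegral_mul_const _ (by fun_prop),
          lintegral_comp_mul_left_padicMulHaar (inv_ne_zero hx) hf]

theorem lintegral_comp_inv_padicHaar {f : ℚ_[p] → ℝ≥0∞} (hf : Measurable f) :
    ∫⁻ x, ENNReal.ofReal (‖x‖ ^ 2)⁻¹ * f x⁻¹ ∂padicHaar p = ∫⁻ x, f x ∂padicHaar p := by
  have h := lintegral_comp_inv_padicMulHaar (p := p) (f := fun x => ENNReal.ofReal ‖x‖ * f x)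
    (by fun_prop)
  rw [lintegral_padicMulHaar (by fun_prop), lintegral_padicMulHaar (by fun_prop)] at h
  convert h using 1 <;> refine lintegral_congr_ae (ae_padicHaar_ne_zero.mono fun x hx => ?_) <;>
    dsimp only <;> rw [← mul_assoc, ← ENNReal.ofReal_mul (by positivity)]
  · rw [norm_inv, ← mul_inv, sq]
  · rw [inv_mul_cancel₀ (norm_ne_zero_iff.2 hx), ENNReal.ofReal_one, one_mul]

/-- The involution `y ↦ 1 / (p y)`, which exchanges `ℚ_p ∖ ℤ_p` and `ℤ_p ∖ {0}`. -/
def padicFlip (p : ℕ) [Fact p.Prime] : ℚ_[p] ≃ᵐ ℚ_[p] where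
  toFun y := (p * y)⁻¹
  invFun y := (p * y)⁻¹
  left_inv y := by
    have hp0 : (p : ℚ_[p]) ≠ 0 := by exact_mod_cast (Fact.out : p.Prime).ne_zero
    field_simp
  right_inv y := by
    have hp0 : (p : ℚ_[p]) ≠ 0 := by exact_mod_cast (Fact.out : p.Prime).ne_zero
    field_simp
  measurable_toFun := by dsimp; fun_prop
  measurable_invFun := by dsimp; fun_prop

theorem padicFlip_apply (y : ℚ_[p]) : padicFlip p y = (p * y)⁻¹ := rfl

theorem measurePreserving_padicFlip : MeasurePreserving (padicFlip p)
    ((padicHaar p).withDensity fun y => ENNReal.ofReal (p * (‖y‖ ^ 2)⁻¹)) (padicHaar p) := by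
  have hp0 : (p : ℚ_[p]) ≠ 0 := by exact_mod_cast (Fact.out : p.Prime).ne_zero
  have hpR : (p : ℝ) ≠ 0 := by exact_mod_cast (Fact.out : p.Prime).ne_zero
  refine ⟨(padicFlip p).measurable, Measure.ext_of_lintegral _ fun f hf => ?_⟩
  have hF : Measurable (fun y => f (padicFlip p y)) := hf.comp (padicFlip p).measurable
  rw [lintegral_map hf (padicFlip p).measurable,
    lintegral_withDensity_eq_lintegral_mul _ (by fun_prop) hF,
    ← lintegral_comp_inv_padicHaar hf]
  have h := lintegral_comp_mul_left_padicHaar hp0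
    (f := fun x => ENNReal.ofReal (‖x‖ ^ 2)⁻¹ * f x⁻¹) (by fun_prop)
  have hpinv : ENNReal.ofReal (p : ℝ)⁻¹ * ENNReal.ofReal p = 1 := by
    rw [← ENNReal.ofReal_mul (by positivity), inv_mul_cancel₀ hpR, ENNReal.ofReal_one]
  rw [Padic.norm_p, inv_inv] at h
  rw [← one_mul (lintegral _ fun x => ENNReal.ofReal (‖x‖ ^ 2)⁻¹ * f x⁻¹), ← hpinv, mul_assoc, ← h,
    ← lintegral_const_mul _ (by fun_prop)]
  refine lintegral_congr fun y => ?_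
  rw [← mul_assoc, ← ENNReal.ofReal_mul (by positivity), Pi.mul_apply, padicFlip_apply, norm_mul,
    Padic.norm_p]
  congr 2
  field_simp

end Haar

section Pi

variable {ι X : Type*} [Fintype ι] [MeasurableSpace X]

theorem lintegral_pi_prod_eq_prod_lintegral (μ : ι → Measure X) [∀ i, SigmaFinite (μ i)]
    {f : ι → X → ℝ≥0∞} (hf : ∀ i, Measurable (f i)) :
    ∫⁻ x, ∏ i, f i (x i) ∂Measure.pi μ = ∏ i, ∫⁻ x, f i x ∂μ i := by
  classical
  have key (t : Finset ι) (x : ι → X) :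
      (∫⋯∫⁻_t, (fun x => ∏ i, f i (x i)) ∂μ) x =
        (∏ i ∈ t, ∫⁻ y, f i y ∂μ i) * ∏ i ∈ tᶜ, f i (x i) := by
    induction t using Finset.induction_on generalizing x with
    | empty => simp
    | insert a t ha ih =>
      rw [lmarginal_insert _ (by fun_prop) ha]
      have hc : tᶜ = insert a (insert a t)ᶜ := by
        ext i; by_cases h : i = a <;> simp [h, ha]
      have hupd (y : X) : ∏ i ∈ tᶜ, f i (Function.update x a y i) =
          f a y * ∏ i ∈ (insert a t)ᶜ, f i (x i) := by
        rw [hc, prod_insert (by simp), Function.update_self]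
        congr 1
        refine prod_congr rfl fun i hi => ?_
        rw [Function.update_of_ne]
        rintro rfl
        simp at hi
      simp_rw [ih, hupd]
      rw [lintegral_const_mul _ ((hf a).mul_const _), lintegral_mul_const _ (hf a),
        prod_insert ha]
      ring
  rcases isEmpty_or_nonempty (ι → X) with h | ⟨⟨x₀⟩⟩
  · obtain ⟨i, hi⟩ := isEmpty_pi.1 h
    rw [lintegral_of_isEmpty, eq_comm, prod_eq_zero (mem_univ i) (lintegral_of_isEmpty _ _)]
  · rw [lintegral_eq_lmarginal_univ x₀]
    convert key univ x₀
    simp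

theorem pi_withDensity_eq_withDensity_pi (μ : ι → Measure X) [∀ i, SigmaFinite (μ i)]
    {f : ι → X → ℝ≥0∞} (hf : ∀ i, Measurable (f i))
    [∀ i, SigmaFinite ((μ i).withDensity (f i))] :
    Measure.pi (fun i => (μ i).withDensity (f i)) =
      (Measure.pi μ).withDensity fun x => ∏ i, f i (x i) := by
  refine Measure.pi_eq fun t ht => ?_
  have hind (x : ι → X) : (Set.univ.pi t).indicator (fun x => ∏ i, f i (x i)) x =
      ∏ i, (t i).indicator (f i) (x i) := by
    classical
    by_cases h : x ∈ Set.univ.pi t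
    · rw [Set.indicator_of_mem h]
      exact prod_congr rfl fun i _ => (Set.indicator_of_mem (h i trivial) _).symm
    · rw [Set.indicator_of_notMem h]
      simp only [Set.mem_pi, Set.mem_univ, true_imp_iff, not_forall] at h
      obtain ⟨i, hi⟩ := h
      exact (prod_eq_zero (mem_univ i) (Set.indicator_of_notMem hi _)).symm
  rw [withDensity_apply _ (MeasurableSet.univ_pi ht),
    ← lintegral_indicator (MeasurableSet.univ_pi ht)]
  simp_rw [hind]
  rw [lintegral_pi_prod_eq_prod_lintegral μ fun i => (hf i).indicator (ht i)]
  exact prod_congr rfl fun i _ => by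
    rw [withDensity_apply _ (ht i), lintegral_indicator (ht i)]

end Pi

section Combinatorics

theorem sum_sum_erase_eq_sum_pairsIn (A : Finset ℕ) (f : ℕ → ℕ → ℂ) :
    ∑ i ∈ A, ∑ j ∈ A.erase i, f i j = ∑ q ∈ pairsIn A, (f q.1 q.2 + f q.2 q.1) := by
  have h1 : ∑ i ∈ A, ∑ j ∈ A.erase i, f i j =
      ∑ i ∈ A, ∑ j ∈ A, ((if i < j then f i j else 0) + if j < i then f i j else 0) := by
    refine sum_congr rfl fun i _ => ?_
    rw [← filter_ne', sum_filter]
    refine sum_congr rfl fun j _ => ?_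
    rcases lt_trichotomy i j with h | rfl | h
    · simp [h, h.ne', h.not_gt]
    · simp
    · simp [h, h.ne, h.not_gt]
  have h2 : ∑ i ∈ A, ∑ j ∈ A, (if j < i then f i j else 0) =
      ∑ i ∈ A, ∑ j ∈ A, if i < j then f j i else 0 := sum_comm
  rw [h1]
  simp_rw [sum_add_distrib]
  rw [h2, pairsIn, sum_filter, sum_filter, sum_product, sum_product]

theorem sum_pairsIn_filter_eq {T I : Finset ℕ} (hI : I ⊆ T) (f : ℕ → ℕ → ℂ)
    (hf : ∀ i j, f i j = f j i) :
    (∑ q ∈ (pairsIn T).filter (fun q => q.1 ∈ T \ I), f q.1 q.2) +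
        ∑ q ∈ (pairsIn T).filter (fun q => q.1 ∈ I ∧ q.2 ∈ T \ I), f q.1 q.2 =
      ∑ q ∈ pairsIn (T \ I), f q.1 q.2 + ∑ i ∈ T \ I, ∑ j ∈ I, f i j := by
  have h1 : (pairsIn T).filter (fun q => q.1 ∈ T \ I) =
      pairsIn (T \ I) ∪ ((T \ I) ×ˢ I).filter fun q => q.1 < q.2 := by
    ext ⟨i, j⟩
    have := @hI j
    simp only [pairsIn, mem_filter, mem_product, mem_union, mem_sdiff]
    tauto
  have hdisj : Disjoint (pairsIn (T \ I)) (((T \ I) ×ˢ I).filter fun q => q.1 < q.2) := by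
    rw [Finset.disjoint_left]
    rintro ⟨i, j⟩
    simp only [pairsIn, mem_filter, mem_product, mem_sdiff]
    tauto
  have h2 : (pairsIn T).filter (fun q => q.1 ∈ I ∧ q.2 ∈ T \ I) =
      (I ×ˢ (T \ I)).filter fun q => q.1 < q.2 := by
    ext ⟨i, j⟩
    have := @hI i
    simp only [pairsIn, mem_filter, mem_product, mem_sdiff]
    tauto
  rw [h1, sum_union hdisj, h2, add_assoc]
  congr 1
  simp_rw [sum_filter, sum_product]
  rw [sum_comm (s := I), ← sum_add_distrib]
  refine sum_congr rfl fun i hi => ?_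
  rw [← sum_add_distrib]
  refine sum_congr rfl fun j hj => ?_
  have hij : i ≠ j := by rintro rfl; exact (mem_sdiff.1 hi).2 hj
  rcases hij.lt_or_gt with h | h <;> simp [h, h.not_gt, hf j i]

/-- The identity between the exponents (after taking logarithms) in the change of variables
`x_i = 1 / (p y_i)`, where `P = log p`, `L i = log ‖y_i‖` and `D q = log ‖y_{q.1} - y_{q.2}‖`. -/
theorem sum_exponents_eq {T I : Finset ℕ} (hI : I ⊆ T) (s : ℕ → ℕ → ℂ)
    (hsym : ∀ i j, s i j = s j i) (a : ℕ → ℂ) (P : ℂ) (L : ℕ → ℂ) (D : ℕ × ℕ → ℂ) :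
    ∑ i ∈ T \ I, (P - 2 * L i) + (∑ i ∈ T \ I, (P - L i) * (a i + ∑ j ∈ I.erase i, s i j) +
        ∑ q ∈ pairsIn (T \ I), (P + D q - L q.1 - L q.2) * s q.1 q.2) =
      P * (((T \ I).card : ℂ) + (∑ i ∈ T \ I, a i) +
          (∑ q ∈ (pairsIn T).filter (fun q => q.1 ∈ T \ I), s q.1 q.2) +
          ∑ q ∈ (pairsIn T).filter (fun q => q.1 ∈ I ∧ q.2 ∈ T \ I), s q.1 q.2) +
        (∑ q ∈ pairsIn (T \ I), D q * s q.1 q.2 -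
          ∑ i ∈ T \ I, L i * (2 + a i + ∑ j ∈ T.erase i, s i j)) := by
  have hpairs : ∑ q ∈ pairsIn (T \ I), (L q.1 + L q.2) * s q.1 q.2 =
      ∑ i ∈ T \ I, L i * ∑ j ∈ (T \ I).erase i, s i j := by
    simp_rw [mul_sum]
    rw [sum_sum_erase_eq_sum_pairsIn]
    exact sum_congr rfl fun q _ => by rw [hsym q.2 q.1]; ring
  have herase : ∀ i ∈ T \ I, I.erase i = I := fun i hi =>
    erase_eq_of_notMem (mem_sdiff.1 hi).2
  have hsplit : ∀ i ∈ T \ I,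
      ∑ j ∈ T.erase i, s i j = ∑ j ∈ I, s i j + ∑ j ∈ (T \ I).erase i, s i j := by
    intro i hi
    rw [← sum_union]
    · congr 1
      ext j
      have := @hI j
      have hij : i ∉ I := (mem_sdiff.1 hi).2
      simp only [mem_union, mem_erase, mem_sdiff]
      by_cases h : j = i
      · subst h; tauto
      · tauto
    · rw [Finset.disjoint_left]
      intro j
      simp only [mem_erase, mem_sdiff]
      tauto
  rw [add_assoc (_ + _), sum_pairsIn_filter_eq hI s hsym,
    sum_congr (s₁ := T \ I) (f := fun i => (P - L i) * (a i + ∑ j ∈ I.erase i, s i j)) rfl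
      fun i hi => by rw [herase i hi],
    sum_congr (s₁ := T \ I) (f := fun i => L i * (2 + a i + ∑ j ∈ T.erase i, s i j)) rfl
      fun i hi => by rw [hsplit i hi]]
  have e1 : ∑ q ∈ pairsIn (T \ I), (P + D q - L q.1 - L q.2) * s q.1 q.2 =
      P * ∑ q ∈ pairsIn (T \ I), s q.1 q.2 + ∑ q ∈ pairsIn (T \ I), D q * s q.1 q.2 -
        ∑ q ∈ pairsIn (T \ I), (L q.1 + L q.2) * s q.1 q.2 := by
    rw [mul_sum, ← sum_add_distrib, ← sum_sub_distrib]
    exact sum_congr rfl fun q _ => by ring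
  have hcard : ((T \ I).card : ℂ) = ∑ i ∈ T \ I, (1 : ℂ) := by simp
  rw [e1, hpairs, hcard]
  have e2 : ∑ i ∈ T \ I, (P - 2 * L i) + ∑ i ∈ T \ I, (P - L i) * (a i + ∑ j ∈ I, s i j) -
      ∑ i ∈ T \ I, L i * ∑ j ∈ (T \ I).erase i, s i j =
      P * (∑ i ∈ T \ I, (1 : ℂ) + ∑ i ∈ T \ I, a i + ∑ i ∈ T \ I, ∑ j ∈ I, s i j) -
        ∑ i ∈ T \ I, L i * (2 + a i + (∑ j ∈ I, s i j + ∑ j ∈ (T \ I).erase i, s i j)) := by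
    rw [← sum_add_distrib, ← sum_sub_distrib, ← sum_add_distrib, ← sum_add_distrib, mul_sum,
      ← sum_sub_distrib]
    exact sum_congr rfl fun i _ => by ring
  linear_combination e2

end Combinatorics

section ChangeOfVariables

variable {p : ℕ} [Fact p.Prime]

/-- The change of variables `x_i = 1 / (p y_i)` in all coordinates. -/
theorem setIntegral_padicPi_eq_setIntegral_flip {ι : Type} [Fintype ι] {E : Type*}
    [NormedAddCommGroup E] [NormedSpace ℝ E] (F : (ι → ℚ_[p]) → E) {t : Set (ι → ℚ_[p])}
    (ht : MeasurableSet t) :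
    ∫ x in t, F x ∂padicPi p ι =
      ∫ y in (fun y i => padicFlip p (y i)) ⁻¹' t,
        (∏ i, p * (‖y i‖ ^ 2)⁻¹ : ℝ) • F (fun i => padicFlip p (y i)) ∂padicPi p ι := by
  let Φ : (ι → ℚ_[p]) ≃ᵐ (ι → ℚ_[p]) := MeasurableEquiv.piCongrRight fun _ => padicFlip p
  have hΦ : MeasurePreserving Φ
      (Measure.pi fun _ : ι =>
        (padicHaar p).withDensity fun y => ENNReal.ofReal (p * (‖y‖ ^ 2)⁻¹))
      (padicPi p ι) :=
    measurePreserving_pi _ _ fun _ => measurePreserving_padicFlip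
  rw [pi_withDensity_eq_withDensity_pi (fun _ : ι => padicHaar p)
    (f := fun _ y => ENNReal.ofReal (p * (‖y‖ ^ 2)⁻¹)) fun _ => by fun_prop] at hΦ
  rw [← hΦ.setIntegral_preimage_emb Φ.measurableEmbedding,
    setIntegral_withDensity_eq_setIntegral_toReal_smul (by fun_prop)
      (ae_of_all _ fun y => ENNReal.prod_lt_top fun _ _ => ENNReal.ofReal_lt_top) _
      (Φ.measurable ht)]
  simp only [ENNReal.toReal_prod]
  refine integral_congr_ae (ae_of_all _ fun y => ?_)
  dsimp only
  congr 1
  exact prod_congr rfl fun i _ => ENNReal.toReal_ofReal (by positivity)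

theorem Complex.ofReal_cpow_eq_exp {r : ℝ} (hr : 0 < r) (z : ℂ) :
    (r : ℂ) ^ z = Complex.exp (Real.log r * z) := by
  rw [Complex.cpow_def_of_ne_zero (by exact_mod_cast hr.ne'), Complex.ofReal_log hr.le]

theorem norm_padicFlip (y : ℚ_[p]) : ‖padicFlip p y‖ = p / ‖y‖ := by
  rw [padicFlip_apply, norm_inv, norm_mul, Padic.norm_p, mul_inv, inv_inv, div_eq_mul_inv]

theorem one_lt_norm_padicFlip_iff (y : ℚ_[p]) : 1 < ‖padicFlip p y‖ ↔ ‖y‖ ≤ 1 ∧ y ≠ 0 := by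
  rcases eq_or_ne y 0 with rfl | hy
  · simp [padicFlip_apply]
  · have hp0 : (p : ℚ_[p]) ≠ 0 := by exact_mod_cast (Fact.out : p.Prime).ne_zero
    rw [padicFlip_apply, norm_inv, one_lt_inv₀ (norm_pos_iff.2 (mul_ne_zero hp0 hy)),
      Padic.norm_p_mul_lt_one_iff]
    simp [hy]

theorem norm_padicFlip_sub {y z : ℚ_[p]} (hy : y ≠ 0) (hz : z ≠ 0) :
    ‖padicFlip p y - padicFlip p z‖ = p * ‖y - z‖ / (‖y‖ * ‖z‖) := by
  have hp0 : (p : ℚ_[p]) ≠ 0 := by exact_mod_cast (Fact.out : p.Prime).ne_zero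
  have : padicFlip p y - padicFlip p z = (p : ℚ_[p])⁻¹ * (z - y) / (y * z) := by
    rw [padicFlip_apply, padicFlip_apply]
    field_simp
  rw [this, norm_div, norm_mul, norm_mul, norm_inv, Padic.norm_p, inv_inv, norm_sub_rev]

variable {A : Finset ℕ}

theorem padicCoord_of_mem (x : A → ℚ_[p]) {n : ℕ} (hn : n ∈ A) : padicCoord x n = x ⟨n, hn⟩ :=
  dif_pos hn

theorem measurable_padicCoord (n : ℕ) : Measurable fun x : A → ℚ_[p] => padicCoord x n := by
  unfold padicCoord
  split_ifs <;> fun_prop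

theorem padicCoord_padicFlip (y : A → ℚ_[p]) {n : ℕ} (hn : n ∈ A) :
    padicCoord (fun i => padicFlip p (y i)) n = padicFlip p (padicCoord y n) := by
  rw [padicCoord_of_mem _ hn, padicCoord_of_mem _ hn]

theorem fst_snd_mem_of_mem_pairsIn {q : ℕ × ℕ} (hq : q ∈ pairsIn A) : q.1 ∈ A ∧ q.2 ∈ A := by
  simpa [pairsIn] using (mem_filter.1 hq).1

theorem measurableSet_off_diagonals :
    MeasurableSet {x : A → ℚ_[p] | (∀ i, 1 < ‖x i‖) ∧
      ∀ q ∈ pairsIn A, padicCoord x q.1 ≠ padicCoord x q.2} := by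
  simp only [Set.ofPred_and, Set.ofPred_forall]
  refine (MeasurableSet.iInter fun i => measurableSet_lt (by fun_prop) (by fun_prop)).inter
    (MeasurableSet.iInter fun q => MeasurableSet.iInter fun _ => ?_)
  exact (measurableSet_eq_fun (measurable_padicCoord q.1) (measurable_padicCoord q.2)).compl

theorem preimage_padicFlip_off_diagonals :
    (fun (y : A → ℚ_[p]) i => padicFlip p (y i)) ⁻¹' {x : A → ℚ_[p] | (∀ i, 1 < ‖x i‖) ∧
        ∀ q ∈ pairsIn A, padicCoord x q.1 ≠ padicCoord x q.2} =
      {y : A → ℚ_[p] | (∀ i, ‖y i‖ ≤ 1 ∧ y i ≠ 0) ∧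
        ∀ q ∈ pairsIn A, padicCoord y q.1 ≠ padicCoord y q.2} := by
  ext y
  simp only [Set.mem_preimage, Set.mem_ofPred_eq, one_lt_norm_padicFlip_iff]
  refine and_congr_right fun _ => forall₂_congr fun q hq => ?_
  obtain ⟨h1, h2⟩ := fst_snd_mem_of_mem_pairsIn hq
  rw [padicCoord_padicFlip y h1, padicCoord_padicFlip y h2, (padicFlip p).injective.ne_iff]

/-- The integrand after the substitution `x_i = 1 / (p y_i)`. -/
theorem F1_integrand_flip {T I : Finset ℕ} (hI : I ⊆ T) (s : ℕ → ℕ → ℂ)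
    (hsym : ∀ i j, s i j = s j i) (b c : ℕ → ℂ) {y : ↥(T \ I) → ℚ_[p]} (hy : ∀ i, y i ≠ 0)
    (hyy : ∀ q ∈ pairsIn (T \ I), padicCoord y q.1 ≠ padicCoord y q.2) :
    (∏ i, p * (‖y i‖ ^ 2)⁻¹ : ℝ) •
      ((∏ i ∈ T \ I, (‖padicCoord (fun i => padicFlip p (y i)) i‖ : ℂ) ^
          (b i + c i + ∑ j ∈ I.erase i, s i j)) *
        ∏ q ∈ pairsIn (T \ I), (‖padicCoord (fun i => padicFlip p (y i)) q.1 -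
          padicCoord (fun i => padicFlip p (y i)) q.2‖ : ℂ) ^ s q.1 q.2) =
      (p : ℂ) ^ (((T \ I).card : ℂ) + (∑ i ∈ T \ I, (b i + c i)) +
          (∑ q ∈ (pairsIn T).filter (fun q => q.1 ∈ T \ I), s q.1 q.2) +
          ∑ q ∈ (pairsIn T).filter (fun q => q.1 ∈ I ∧ q.2 ∈ T \ I), s q.1 q.2) *
        ((∏ q ∈ pairsIn (T \ I),
          (‖padicCoord y q.1 - padicCoord y q.2‖ : ℂ) ^ s q.1 q.2) /
            ∏ i ∈ T \ I,
              (‖padicCoord y i‖ : ℂ) ^ (2 + b i + c i + ∑ j ∈ T.erase i, s i j)) := by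
  have hp : (0 : ℝ) < p := by exact_mod_cast (Fact.out : p.Prime).pos
  have hy0 : ∀ i ∈ T \ I, padicCoord y i ≠ 0 := fun i hi => by
    rw [padicCoord_of_mem y hi]; exact hy _
  have hpos : ∀ i ∈ T \ I, 0 < ‖padicCoord y i‖ := fun i hi => norm_pos_iff.2 (hy0 i hi)
  set P : ℂ := ((Real.log p : ℝ) : ℂ)
  set L : ℕ → ℂ := fun i => (Real.log ‖padicCoord y i‖ : ℝ)
  set D : ℕ × ℕ → ℂ := fun q => (Real.log ‖padicCoord y q.1 - padicCoord y q.2‖ : ℝ)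
  have e1 : ((∏ i, p * (‖y i‖ ^ 2)⁻¹ : ℝ) : ℂ) = Complex.exp (∑ i ∈ T \ I, (P - 2 * L i)) := by
    rw [Complex.exp_sum, ← prod_coe_sort (T \ I), Complex.ofReal_prod]
    refine prod_congr rfl fun i _ => ?_
    have hi := hpos i i.2
    have hlog : P - 2 * L i = (Real.log (p * (‖padicCoord y i‖ ^ 2)⁻¹) : ℝ) := by
      rw [Real.log_mul hp.ne' (by positivity), Real.log_inv, Real.log_pow,
        Complex.ofReal_add, Complex.ofReal_neg, Complex.ofReal_mul, sub_eq_add_neg]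
      norm_num [P, L]
    rw [hlog, ← Complex.ofReal_exp, Real.exp_log (by positivity), padicCoord_of_mem y i.2]
  have e2 : ∀ i ∈ T \ I, (‖padicCoord (fun i => padicFlip p (y i)) i‖ : ℂ) ^
      (b i + c i + ∑ j ∈ I.erase i, s i j) =
        Complex.exp ((P - L i) * ((b i + c i) + ∑ j ∈ I.erase i, s i j)) := by
    intro i hi
    have hi' := hpos i hi
    rw [padicCoord_padicFlip y hi, norm_padicFlip, Complex.ofReal_cpow_eq_exp (by positivity),
      Real.log_div hp.ne' hi'.ne', Complex.ofReal_sub]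
  have e3 : ∀ q ∈ pairsIn (T \ I), (‖padicCoord (fun i => padicFlip p (y i)) q.1 -
      padicCoord (fun i => padicFlip p (y i)) q.2‖ : ℂ) ^ s q.1 q.2 =
        Complex.exp ((P + D q - L q.1 - L q.2) * s q.1 q.2) := by
    intro q hq
    obtain ⟨h1, h2⟩ := fst_snd_mem_of_mem_pairsIn hq
    have hq1 := hpos _ h1
    have hq2 := hpos _ h2
    have hq3 : 0 < ‖padicCoord y q.1 - padicCoord y q.2‖ :=
      norm_pos_iff.2 (sub_ne_zero.2 (hyy q hq))
    rw [padicCoord_padicFlip y h1, padicCoord_padicFlip y h2,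
      norm_padicFlip_sub (hy0 _ h1) (hy0 _ h2), Complex.ofReal_cpow_eq_exp (by positivity),
      Real.log_div (by positivity) (by positivity), Real.log_mul hp.ne' hq3.ne',
      Real.log_mul hq1.ne' hq2.ne']
    congr 2
    simp only [Complex.ofReal_add, Complex.ofReal_sub, P, D, L]
    ring
  have e4 : ∀ q ∈ pairsIn (T \ I), (‖padicCoord y q.1 - padicCoord y q.2‖ : ℂ) ^ s q.1 q.2 =
      Complex.exp (D q * s q.1 q.2) := fun q hq =>
    Complex.ofReal_cpow_eq_exp (norm_pos_iff.2 (sub_ne_zero.2 (hyy q hq))) _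
  have e5 : ∀ i ∈ T \ I, (‖padicCoord y i‖ : ℂ) ^ (2 + b i + c i + ∑ j ∈ T.erase i, s i j) =
      Complex.exp (L i * (2 + (b i + c i) + ∑ j ∈ T.erase i, s i j)) := fun i hi => by
    rw [Complex.ofReal_cpow_eq_exp (hpos i hi), add_assoc 2]
  have e6 (z : ℂ) : (p : ℂ) ^ z = Complex.exp (P * z) := by
    exact_mod_cast Complex.ofReal_cpow_eq_exp hp z
  rw [Complex.real_smul, e1, prod_congr rfl e2, prod_congr rfl e3, prod_congr rfl e4,
    prod_congr rfl e5, e6, ← Complex.exp_sum, ← Complex.exp_sum, ← Complex.exp_sum,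
    ← Complex.exp_sum, ← Complex.exp_add, ← Complex.exp_add, ← Complex.exp_sub, ← Complex.exp_add,
    sum_exponents_eq hI s hsym (fun i => b i + c i) P L D]

end ChangeOfVariables

/-- Lemma A(ii): the integral of `F₁(s, x; N)` over `(ℚ_p ∖ ℤ_p)^{T∖I}` equals
`p^{M(s)}` times an integral over `ℤ_p^{T∖I}`. -/
theorem F1_integral_formula (p : ℕ) [Fact p.Prime] (N : ℕ) (hN : 4 ≤ N)
    (s : ℕ → ℕ → ℂ) (hsym : ∀ i j, s i j = s j i)
    (I : Finset ℕ) (hI : I ⊆ Tset N)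
    (h1 : ∀ i ∈ Tset N \ I,
      (s 1 i).re + (s (N - 1) i).re + (∑ j ∈ (Tset N).erase i, (s i j).re) + 1 < 0)
    (h2 : ∀ q ∈ pairsIn (Tset N \ I), -1 < (s q.1 q.2).re) :
    (∫ x in {x : ↥(Tset N \ I) → ℚ_[p] |
        (∀ i, 1 < ‖x i‖) ∧
        ∀ q ∈ pairsIn (Tset N \ I), padicCoord x q.1 ≠ padicCoord x q.2},
        (∏ i ∈ Tset N \ I,
          (‖padicCoord x i‖ : ℂ) ^ (s 1 i + s (N - 1) i + ∑ j ∈ I.erase i, s i j)) *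
          ∏ q ∈ pairsIn (Tset N \ I),
            (‖padicCoord x q.1 - padicCoord x q.2‖ : ℂ) ^ s q.1 q.2
        ∂(padicPi p ↥(Tset N \ I))) =
      (p : ℂ) ^ (((Tset N \ I).card : ℂ) +
          (∑ i ∈ Tset N \ I, (s 1 i + s (N - 1) i)) +
          (∑ q ∈ (pairsIn (Tset N)).filter (fun q => q.1 ∈ Tset N \ I), s q.1 q.2) +
          ∑ q ∈ (pairsIn (Tset N)).filter (fun q => q.1 ∈ I ∧ q.2 ∈ Tset N \ I), s q.1 q.2) *
        ∫ y in {y : ↥(Tset N \ I) → ℚ_[p] |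
          (∀ i, ‖y i‖ ≤ 1 ∧ y i ≠ 0) ∧
          ∀ q ∈ pairsIn (Tset N \ I), padicCoord y q.1 ≠ padicCoord y q.2},
          (∏ q ∈ pairsIn (Tset N \ I),
            (‖padicCoord y q.1 - padicCoord y q.2‖ : ℂ) ^ s q.1 q.2) /
            ∏ i ∈ Tset N \ I,
              (‖padicCoord y i‖ : ℂ) ^
                (2 + s 1 i + s (N - 1) i + ∑ j ∈ (Tset N).erase i, s i j)
          ∂(padicPi p ↥(Tset N \ I)) := by
  rw [setIntegral_padicPi_eq_setIntegral_flip _ measurableSet_off_diagonals,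
    preimage_padicFlip_off_diagonals, ← integral_const_mul]
  have hmeas := (MeasurableEquiv.piCongrRight fun _ : ↥(Tset N \ I) => padicFlip p).measurable
    (measurableSet_off_diagonals (p := p) (A := Tset N \ I))
  refine setIntegral_congr_fun (preimage_padicFlip_off_diagonals (p := p) ▸ hmeas) fun y hy => ?_
  exact F1_integrand_flip hI s hsym (fun i => s 1 i) (fun i => s (N - 1) i)
    (fun i => (hy.1 i).2) hy.2
end
end
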